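/- arXiv:1903.11802 — 2 statements merged into one kernel-verified Lean document; each statement's English description precedes it below -/
import Mathlib

section
/- In a non-symmetric operad, the circle product f ∘ g = Σ_{i=1}^m (-1)^{(i-1)(n-1)} f ∘_i g (for f ∈ O(m), g ∈ O(n)) satisfies the pre-Lie identity: (f ∘ g) ∘ h - f ∘ (g ∘ h) = (-1)^{(n-1)(p-1)} ((f ∘ h) ∘ g - f ∘ (h ∘ g)) for f ∈ O(m), g ∈ O(n), h ∈ O(p). -/
universe u v

/-- A collection of vector spaces `O(n)`, `n ≥ 1` (only positive arities are
used below). -/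
structure OperadSpace (K : Type u) [Field K] where
  O : ℕ → Type v
  grp : ∀ n, AddCommGroup (O n)
  mod : ∀ n, @Module K (O n) _ (grp n).toAddCommMonoid

attribute [instance] OperadSpace.grp OperadSpace.mod

/-- A non-symmetric operad in the category of vector spaces: partial
compositions `∘ᵢ : O(m) ⊗ O(n) → O(m+n-1)` (`1 ≤ i ≤ m`, here the middle
argument of `pcomp`), bilinear in each variable, with the two associativity
axioms and an identity element `id ∈ O(1)`. -/
structure NSOperad (K : Type u) [Field K] extends OperadSpace.{u, v} K where
  pcomp : ∀ {m n : ℕ}, O m → ℕ → O n → O (m + n - 1)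
  one : O 1
  pcomp_add_left : ∀ {m n : ℕ} (i : ℕ) (f f' : O m) (g : O n),
    pcomp (f + f') i g = pcomp f i g + pcomp f' i g
  pcomp_add_right : ∀ {m n : ℕ} (i : ℕ) (f : O m) (g g' : O n),
    pcomp f i (g + g') = pcomp f i g + pcomp f i g'
  pcomp_smul_left : ∀ {m n : ℕ} (c : K) (i : ℕ) (f : O m) (g : O n),
    pcomp (c • f) i g = c • pcomp f i g
  pcomp_smul_right : ∀ {m n : ℕ} (c : K) (i : ℕ) (f : O m) (g : O n),
    pcomp f i (c • g) = c • pcomp f i g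
  assoc1 : ∀ {m n p : ℕ} (f : O m) (g : O n) (h : O p) {i j : ℕ},
    1 ≤ i → i ≤ m → 1 ≤ j → j ≤ n →
    HEq (pcomp (pcomp f i g) (i + j - 1) h) (pcomp f i (pcomp g j h))
  assoc2 : ∀ {m n p : ℕ} (f : O m) (g : O n) (h : O p) {i j : ℕ},
    1 ≤ i → i < j → j ≤ m → 1 ≤ n →
    HEq (pcomp (pcomp f i g) (j + n - 1) h) (pcomp (pcomp f j h) i g)
  pcomp_one : ∀ {m : ℕ} (f : O m) (i : ℕ), 1 ≤ i → i ≤ m →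
    HEq (pcomp f i one) f
  one_pcomp : ∀ {m : ℕ} (f : O m), HEq (pcomp one 1 f) f

/-- The circle product `f ∘ g = Σ_{i=1}^{m} (-1)^{(i-1)(n-1)} f ∘ᵢ g`. -/
def NSOperad.circ {K : Type u} [Field K] (C : NSOperad.{u, v} K)
    {m n : ℕ} (f : C.O m) (g : C.O n) : C.O (m + n - 1) :=
  ∑ i ∈ Finset.Icc 1 m, ((-1 : ℤ) ^ ((i - 1) * (n - 1))) • C.pcomp f i g

namespace NSOperad

variable {K : Type u} [Field K] (C : NSOperad.{u, v} K)

/-- Transport along an equality of arities, as an additive map. -/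
def arityCast {k l : ℕ} (e : k = l) : C.O k →+ C.O l where
  toFun := cast (congrArg C.O e)
  map_zero' := by subst e; rfl
  map_add' := by subst e; exact fun _ _ => rfl

@[simp]
theorem arityCast_arityCast {k l r : ℕ} (e : k = l) (e' : l = r) (x : C.O k) :
    C.arityCast e' (C.arityCast e x) = C.arityCast (e.trans e') x := by
  subst e e'; rfl

@[simp]
theorem arityCast_self {k : ℕ} (e : k = k) (x : C.O k) : C.arityCast e x = x := rfl

theorem eq_arityCast_of_heq {k l : ℕ} (e : l = k) {x : C.O k} {y : C.O l} (hxy : HEq x y) :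
    x = C.arityCast e y := by
  subst e; exact eq_of_heq hxy

/-- Partial composition as a biadditive map. -/
def pcompHom (m n i : ℕ) : C.O m →+ C.O n →+ C.O (m + n - 1) :=
  AddMonoidHom.mk' (fun f => AddMonoidHom.mk' (C.pcomp f i) (C.pcomp_add_right i f))
    fun f f' => AddMonoidHom.ext (C.pcomp_add_left i f f')

theorem pcomp_eq_pcompHom {m n : ℕ} (i : ℕ) (f : C.O m) (g : C.O n) :
    C.pcomp f i g = C.pcompHom m n i f g := rfl

theorem circ_circ_left {m n p : ℕ} (f : C.O m) (g : C.O n) (h : C.O p) :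
    C.circ (C.circ f g) h =
      ∑ i ∈ Finset.Icc 1 m, ∑ k ∈ Finset.Icc 1 (m + n - 1),
        ((-1 : ℤ) ^ ((i - 1) * (n - 1) + (k - 1) * (p - 1))) •
          C.pcomp (C.pcomp f i g) k h := by
  rw [Finset.sum_comm]
  simp only [circ, pcomp_eq_pcompHom, map_sum, map_zsmul, AddMonoidHom.finsetSum_apply,
    AddMonoidHom.zsmul_apply, Finset.smul_sum, smul_smul, pow_add]
  simp only [mul_comm]

theorem circ_circ_right {m n p : ℕ} (f : C.O m) (g : C.O n) (h : C.O p) :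
    C.circ f (C.circ g h) =
      ∑ i ∈ Finset.Icc 1 m, ∑ j ∈ Finset.Icc 1 n,
        ((-1 : ℤ) ^ ((i - 1) * (n + p - 1 - 1) + (j - 1) * (p - 1))) •
          C.pcomp f i (C.pcomp g j h) := by
  simp only [circ, pcomp_eq_pcompHom, map_sum, map_zsmul, Finset.smul_sum, smul_smul, pow_add]

/-- The part of `(f ∘ g) ∘ h` in which `g` and `h` are inserted into distinct inputs of `f`,
the input receiving `g` preceding the one receiving `h`. -/
def disjointCirc {m n p : ℕ} (f : C.O m) (g : C.O n) (h : C.O p) : C.O (m + n - 1 + p - 1) :=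
  ∑ i ∈ Finset.Icc 1 m, ∑ j ∈ Finset.Ioc i m,
    ((-1 : ℤ) ^ ((i - 1) * (n - 1) + (j + n - 1 - 1) * (p - 1))) •
      C.pcomp (C.pcomp f i g) (j + n - 1) h

theorem sum_Icc_split {M : Type*} [AddCommMonoid M] (F : ℕ → M) {m n i : ℕ}
    (hn : 1 ≤ n) (hi : 1 ≤ i) (him : i ≤ m) :
    ∑ k ∈ Finset.Icc 1 (m + n - 1), F k =
      ∑ k ∈ Finset.Ico 1 i, F k + ∑ j ∈ Finset.Icc 1 n, F (i + j - 1) +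
        ∑ j ∈ Finset.Ioc i m, F (j + n - 1) := by
  obtain ⟨n, rfl⟩ := Nat.exists_eq_add_of_le' hn
  obtain ⟨i, rfl⟩ := Nat.exists_eq_add_of_le' hi
  have e₁ : Finset.Icc 1 (m + (n + 1) - 1) = Finset.Ico 1 (m + n + 1) := by
    ext; simp only [Finset.mem_Icc, Finset.mem_Ico]; omega
  have e₂ : Finset.Icc 1 (n + 1) = Finset.Ico 1 (n + 2) := by
    ext; simp only [Finset.mem_Icc, Finset.mem_Ico]; omega
  have e₃ : Finset.Ioc (i + 1) m = Finset.Ico (i + 2) (m + 1) := by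
    ext; simp only [Finset.mem_Ioc, Finset.mem_Ico]; omega
  have h₁ (j : ℕ) : i + 1 + j - 1 = j + i := by omega
  have h₂ (j : ℕ) : j + (n + 1) - 1 = j + n := by omega
  rw [e₁]
  simp only [e₂, e₃, h₁, h₂, Finset.sum_Ico_add']
  rw [show 1 + i = i + 1 by omega, show n + 2 + i = i + 2 + n by omega,
    Finset.sum_Ico_consecutive _ (by omega) (by omega),
    Finset.sum_Ico_consecutive _ (by omega) (by omega), Nat.add_right_comm m]

/-- The associator of the circle product only involves insertions into distinct inputs. -/
theorem circ_associator {m n p : ℕ} (hn : 1 ≤ n) (hp : 1 ≤ p)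
    (f : C.O m) (g : C.O n) (h : C.O p) :
    C.circ (C.circ f g) h - C.arityCast (by omega) (C.circ f (C.circ g h)) =
      C.disjointCirc f g h +
        ((-1 : ℤ) ^ ((n - 1) * (p - 1))) • C.arityCast (by omega) (C.disjointCirc f h g) := by
  have nested : C.arityCast (by omega) (C.circ f (C.circ g h)) =
      ∑ i ∈ Finset.Icc 1 m, ∑ j ∈ Finset.Icc 1 n,
        ((-1 : ℤ) ^ ((i - 1) * (n - 1) + (i + j - 1 - 1) * (p - 1))) •
          C.pcomp (C.pcomp f i g) (i + j - 1) h := by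
    simp only [circ_circ_right, map_sum, map_zsmul]
    refine Finset.sum_congr rfl fun i hi => Finset.sum_congr rfl fun j hj => ?_
    rw [Finset.mem_Icc] at hi hj
    rw [C.eq_arityCast_of_heq (by omega) (C.assoc1 f g h hi.1 hi.2 hj.1 hj.2)]
    congr 2
    obtain ⟨i, rfl⟩ := Nat.exists_eq_add_of_le' hi.1
    obtain ⟨j, rfl⟩ := Nat.exists_eq_add_of_le' hj.1
    obtain ⟨n, rfl⟩ := Nat.exists_eq_add_of_le' hn
    obtain ⟨p, rfl⟩ := Nat.exists_eq_add_of_le' hp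
    rw [show n + 1 + (p + 1) - 1 - 1 = n + p by omega,
      show i + 1 + (j + 1) - 1 - 1 = i + j by omega]
    simp only [Nat.add_sub_cancel]
    ring
  have swapped :
      ((-1 : ℤ) ^ ((n - 1) * (p - 1))) • C.arityCast (by omega) (C.disjointCirc f h g) =
      ∑ i ∈ Finset.Icc 1 m, ∑ k ∈ Finset.Ico 1 i,
        ((-1 : ℤ) ^ ((i - 1) * (n - 1) + (k - 1) * (p - 1))) •
          C.pcomp (C.pcomp f i g) k h := by
    rw [Finset.sum_comm' (t' := Finset.Icc 1 m) (s' := fun k => Finset.Ioc k m)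
      (by intro i k; simp only [Finset.mem_Icc, Finset.mem_Ico, Finset.mem_Ioc]; omega)]
    simp only [disjointCirc, map_sum, map_zsmul, Finset.smul_sum, smul_smul, ← pow_add]
    refine Finset.sum_congr rfl fun k hk => Finset.sum_congr rfl fun i hi => ?_
    rw [Finset.mem_Icc] at hk
    rw [Finset.mem_Ioc] at hi
    rw [C.eq_arityCast_of_heq (by omega) (C.assoc2 f h g hk.1 hi.1 hi.2 hp),
      arityCast_arityCast, arityCast_self]
    congr 1
    obtain ⟨i, rfl⟩ := Nat.exists_eq_add_of_le' (hk.1.trans hi.1.le)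
    obtain ⟨n, rfl⟩ := Nat.exists_eq_add_of_le' hn
    obtain ⟨p, rfl⟩ := Nat.exists_eq_add_of_le' hp
    rw [show i + 1 + (p + 1) - 1 - 1 = i + p by omega]
    simp only [Nat.add_sub_cancel]
    rw [show n * p + ((k - 1) * p + (i + p) * n) = i * n + (k - 1) * p + 2 * (n * p) by ring,
      pow_add _ _ (2 * _), pow_mul _ 2, neg_one_sq, one_pow, mul_one]
  rw [nested, swapped, circ_circ_left, disjointCirc, ← Finset.sum_sub_distrib,
    ← Finset.sum_add_distrib]
  refine Finset.sum_congr rfl fun i hi => ?_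
  rw [Finset.mem_Icc] at hi
  rw [sum_Icc_split _ hn hi.1 hi.2]
  abel

end NSOperad

/-- in a non-symmetric operad, the circle product satisfies the
pre-Lie identity
`(f ∘ g) ∘ h - f ∘ (g ∘ h) = (-1)^{(n-1)(p-1)} ((f ∘ h) ∘ g - f ∘ (h ∘ g))`
for `f ∈ O(m)`, `g ∈ O(n)`, `h ∈ O(p)` (the `cast`s identify the equal
arities `m+n-1+p-1 = m+(n+p-1)-1 = ...`). -/
theorem circ_pre_lie {K : Type u} [Field K] (C : NSOperad.{u, v} K)
    {m n p : ℕ} (hm : 1 ≤ m) (hn : 1 ≤ n) (hp : 1 ≤ p)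
    (f : C.O m) (g : C.O n) (h : C.O p) :
    C.circ (C.circ f g) h
      - cast (congrArg C.O (by omega : m + (n + p - 1) - 1 = m + n - 1 + p - 1))
          (C.circ f (C.circ g h))
      = ((-1 : ℤ) ^ ((n - 1) * (p - 1))) •
        (cast (congrArg C.O (by omega : m + p - 1 + n - 1 = m + n - 1 + p - 1))
            (C.circ (C.circ f h) g)
          - cast (congrArg C.O (by omega : m + (p + n - 1) - 1 = m + n - 1 + p - 1))
              (C.circ f (C.circ h g))) := by
  have key := congrArg (C.arityCast (by omega : m + p - 1 + n - 1 = m + n - 1 + p - 1))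
    (C.circ_associator hp hn f h g)
  simp only [map_sub, map_add, map_zsmul, NSOperad.arityCast_arityCast,
    NSOperad.arityCast_self] at key
  change _ - C.arityCast (by omega) (C.circ f (C.circ g h)) =
    _ • (C.arityCast (by omega) (C.circ (C.circ f h) g) -
      C.arityCast (by omega) (C.circ f (C.circ h g)))
  rw [C.circ_associator hn hp f g h, key, mul_comm (p - 1), smul_add, smul_smul, ← mul_pow,
    neg_one_mul, neg_neg, one_pow, one_smul]
  exact add_comm _ _
end

section
/- Strict 2-term Dend_∞-algebras (A_1 →^d A_0, μ_2, μ_3 = 0) are in one-to-one correspondence with crossed modules of dendriform algebras (A, B, dt, θ_1, θ_2). In particular, given a strict 2-term Dend_∞-algebra, A_0 is a dendriform algebra under μ_2, A_1 is a dendriform algebra under π_A([r]; m, n) := μ_2([r]; dm, n), d is a dendriform morphism, and the actions μ_2 of A_0 on A_1 satisfy the crossed-module identities. -/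
universe u

section

variable (K : Type u) [Field K] (A0 A1 : Type u)
  [AddCommGroup A0] [Module K A0] [AddCommGroup A1] [Module K A1]

/-- A 2-term `Dend_∞`-algebra on the chain complex `A1 → A0` (components as in
Definition 6.1: `x0, x1` are `μ₂` on `A0 ⊗ A0`, `l0, l1` on `A0 ⊗ A1`,
`r0, r1` on `A1 ⊗ A0`, and `s0, s1, s2` are the components of `μ₃`). -/
structure TwoTermDendInfty where
  d : A1 →ₗ[K] A0
  x0 : A0 →ₗ[K] A0 →ₗ[K] A0
  x1 : A0 →ₗ[K] A0 →ₗ[K] A0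
  l0 : A0 →ₗ[K] A1 →ₗ[K] A1
  l1 : A0 →ₗ[K] A1 →ₗ[K] A1
  r0 : A1 →ₗ[K] A0 →ₗ[K] A1
  r1 : A1 →ₗ[K] A0 →ₗ[K] A1
  s0 : A0 →ₗ[K] A0 →ₗ[K] A0 →ₗ[K] A1
  s1 : A0 →ₗ[K] A0 →ₗ[K] A0 →ₗ[K] A1
  s2 : A0 →ₗ[K] A0 →ₗ[K] A0 →ₗ[K] A1
  cii0 : ∀ a m, d (l0 a m) = x0 a (d m)
  cii1 : ∀ a m, d (l1 a m) = x1 a (d m)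
  ciii0 : ∀ m a, d (r0 m a) = x0 (d m) a
  ciii1 : ∀ m a, d (r1 m a) = x1 (d m) a
  civ0 : ∀ m n, l0 (d m) n = r0 m (d n)
  civ1 : ∀ m n, l1 (d m) n = r1 m (d n)
  cv0 : ∀ a b c, x0 (x0 a b) c - x0 a (x0 b c + x1 b c) = d (s0 a b c)
  cv1 : ∀ a b c, x0 (x1 a b) c - x1 a (x0 b c) = d (s1 a b c)
  cv2 : ∀ a b c, x1 (x0 a b + x1 a b) c - x1 a (x1 b c) = d (s2 a b c)
  cvi1_0 : ∀ a b m, l0 (x0 a b) m - l0 a (l0 b m + l1 b m) = s0 a b (d m)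
  cvi1_1 : ∀ a b m, l0 (x1 a b) m - l1 a (l0 b m) = s1 a b (d m)
  cvi1_2 : ∀ a b m, l1 (x0 a b + x1 a b) m - l1 a (l1 b m) = s2 a b (d m)
  cvi2_0 : ∀ a m c, r0 (l0 a m) c - l0 a (r0 m c + r1 m c) = s0 a (d m) c
  cvi2_1 : ∀ a m c, r0 (l1 a m) c - l1 a (r0 m c) = s1 a (d m) c
  cvi2_2 : ∀ a m c, r1 (l0 a m + l1 a m) c - l1 a (r1 m c) = s2 a (d m) c
  cvi3_0 : ∀ m b c, r0 (r0 m b) c - r0 m (x0 b c + x1 b c) = s0 (d m) b c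
  cvi3_1 : ∀ m b c, r0 (r1 m b) c - r1 m (x0 b c) = s1 (d m) b c
  cvi3_2 : ∀ m b c, r1 (r0 m b + r1 m b) c - r1 m (x1 b c) = s2 (d m) b c
  cvii0 : ∀ a b c e,
    s0 (x0 a b) c e - s0 a (x0 b c + x1 b c) e + s0 a b (x0 c e + x1 c e)
      = r0 (s0 a b c) e + l0 a (s0 b c e + s1 b c e + s2 b c e)
  cvii1 : ∀ a b c e,
    s0 (x1 a b) c e - s1 a (x0 b c) e + s1 a b (x0 c e + x1 c e)
      = r0 (s1 a b c) e + l1 a (s0 b c e)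
  cvii2 : ∀ a b c e,
    s1 (x0 a b + x1 a b) c e - s1 a (x1 b c) e + s2 a b (x0 c e)
      = r0 (s2 a b c) e + l1 a (s1 b c e)
  cvii3 : ∀ a b c e,
    s2 (x0 a b + x1 a b) c e - s2 a (x0 b c + x1 b c) e + s2 a b (x1 c e)
      = r1 (s0 a b c + s1 a b c + s2 a b c) e + l1 a (s2 b c e)

/-- A crossed module of dendriform algebras `(A, B, dt, θ₁, θ₂)`, with
`B = A0` (products `pb0, pb1`), `A = A1` (products `pa0, pa1`), a dendriform
morphism `dt : A → B`, and a representation `(t10, t11, t20, t21)` of `B` on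
`A`, satisfying the crossed-module identities. -/
structure DendCrossedModule where
  pb0 : A0 →ₗ[K] A0 →ₗ[K] A0
  pb1 : A0 →ₗ[K] A0 →ₗ[K] A0
  hb1 : ∀ a b c, pb0 (pb0 a b) c = pb0 a (pb0 b c + pb1 b c)
  hb2 : ∀ a b c, pb0 (pb1 a b) c = pb1 a (pb0 b c)
  hb3 : ∀ a b c, pb1 (pb0 a b + pb1 a b) c = pb1 a (pb1 b c)
  pa0 : A1 →ₗ[K] A1 →ₗ[K] A1
  pa1 : A1 →ₗ[K] A1 →ₗ[K] A1
  ha1 : ∀ m n q, pa0 (pa0 m n) q = pa0 m (pa0 n q + pa1 n q)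
  ha2 : ∀ m n q, pa0 (pa1 m n) q = pa1 m (pa0 n q)
  ha3 : ∀ m n q, pa1 (pa0 m n + pa1 m n) q = pa1 m (pa1 n q)
  dt : A1 →ₗ[K] A0
  dtMorph0 : ∀ m n, dt (pa0 m n) = pb0 (dt m) (dt n)
  dtMorph1 : ∀ m n, dt (pa1 m n) = pb1 (dt m) (dt n)
  t10 : A0 →ₗ[K] A1 →ₗ[K] A1
  t11 : A0 →ₗ[K] A1 →ₗ[K] A1
  t20 : A1 →ₗ[K] A0 →ₗ[K] A1
  t21 : A1 →ₗ[K] A0 →ₗ[K] A1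
  rep1 : ∀ a b m, t10 (pb0 a b) m = t10 a (t10 b m + t11 b m)
  rep2 : ∀ a b m, t10 (pb1 a b) m = t11 a (t10 b m)
  rep3 : ∀ a b m, t11 (pb0 a b + pb1 a b) m = t11 a (t11 b m)
  rep4 : ∀ a m c, t20 (t10 a m) c = t10 a (t20 m c + t21 m c)
  rep5 : ∀ a m c, t20 (t11 a m) c = t11 a (t20 m c)
  rep6 : ∀ a m c, t21 (t10 a m + t11 a m) c = t11 a (t21 m c)
  rep7 : ∀ m b c, t20 (t20 m b) c = t20 m (pb0 b c + pb1 b c)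
  rep8 : ∀ m b c, t20 (t21 m b) c = t21 m (pb0 b c)
  rep9 : ∀ m b c, t21 (t20 m b + t21 m b) c = t21 m (pb1 b c)
  cm1_0 : ∀ b m, dt (t10 b m) = pb0 b (dt m)
  cm1_1 : ∀ b m, dt (t11 b m) = pb1 b (dt m)
  cm2_0 : ∀ m b, dt (t20 m b) = pb0 (dt m) b
  cm2_1 : ∀ m b, dt (t21 m b) = pb1 (dt m) b
  cm3_0 : ∀ m n, t10 (dt m) n = pa0 m n
  cm3_1 : ∀ m n, t11 (dt m) n = pa1 m n
  cm4_0 : ∀ m n, t20 m (dt n) = pa0 m n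
  cm4_1 : ∀ m n, t21 m (dt n) = pa1 m n
  -- (θ₁ ∘₂ π_A)([s]; b, m, n) = (π_A ∘₁ θ₁)([s]; b, m, n):
  cm5_0 : ∀ b m n, t10 b (pa0 m n + pa1 m n) = pa0 (t10 b m) n
  cm5_1 : ∀ b m n, t11 b (pa0 m n) = pa0 (t11 b m) n
  cm5_2 : ∀ b m n, t11 b (pa1 m n) = pa1 (t10 b m + t11 b m) n
  -- (θ₂ ∘₁ π_A)([s]; m, n, b) = (π_A ∘₂ θ₂)([s]; m, n, b):
  cm6_0 : ∀ m n b, t20 (pa0 m n) b = pa0 m (t20 n b + t21 n b)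
  cm6_1 : ∀ m n b, t20 (pa1 m n) b = pa1 m (t20 n b)
  cm6_2 : ∀ m n b, t21 (pa0 m n + pa1 m n) b = pa1 m (t21 n b)

end

section

variable {K : Type u} [Field K] {A0 A1 : Type u}
  [AddCommGroup A0] [Module K A0] [AddCommGroup A1] [Module K A1]

/-- The crossed module of a strict 2-term `Dend_∞`-algebra: the product on `A1` is
`π_A(m, n) = μ₂(d m, n)`, and `A0` acts on `A1` by `μ₂`. -/
def TwoTermDendInfty.toCrossedModule (X : TwoTermDendInfty K A0 A1)
    (h0 : X.s0 = 0) (h1 : X.s1 = 0) (h2 : X.s2 = 0) : DendCrossedModule K A0 A1 where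
  pb0 := X.x0
  pb1 := X.x1
  pa0 := X.l0 ∘ₗ X.d
  pa1 := X.l1 ∘ₗ X.d
  dt := X.d
  t10 := X.l0
  t11 := X.l1
  t20 := X.r0
  t21 := X.r1
  hb1 a b c := sub_eq_zero.mp (by rw [X.cv0]; simp [h0])
  hb2 a b c := sub_eq_zero.mp (by rw [X.cv1]; simp [h1])
  hb3 a b c := sub_eq_zero.mp (by rw [X.cv2]; simp [h2])
  rep1 a b m := sub_eq_zero.mp (by rw [X.cvi1_0]; simp [h0])
  rep2 a b m := sub_eq_zero.mp (by rw [X.cvi1_1]; simp [h1])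
  rep3 a b m := sub_eq_zero.mp (by rw [X.cvi1_2]; simp [h2])
  rep4 a m c := sub_eq_zero.mp (by rw [X.cvi2_0]; simp [h0])
  rep5 a m c := sub_eq_zero.mp (by rw [X.cvi2_1]; simp [h1])
  rep6 a m c := sub_eq_zero.mp (by rw [X.cvi2_2]; simp [h2])
  rep7 m b c := sub_eq_zero.mp (by rw [X.cvi3_0]; simp [h0])
  rep8 m b c := sub_eq_zero.mp (by rw [X.cvi3_1]; simp [h1])
  rep9 m b c := sub_eq_zero.mp (by rw [X.cvi3_2]; simp [h2])
  ha1 m n q := by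
    have h := X.cvi1_0 (X.d m) (X.d n) q
    simp only [h0, LinearMap.zero_apply, sub_eq_zero] at h
    simpa [X.cii0, X.cii1] using h
  ha2 m n q := by
    have h := X.cvi1_1 (X.d m) (X.d n) q
    simp only [h1, LinearMap.zero_apply, sub_eq_zero] at h
    simpa [X.cii0, X.cii1] using h
  ha3 m n q := by
    have h := X.cvi1_2 (X.d m) (X.d n) q
    simp only [h2, LinearMap.zero_apply, sub_eq_zero] at h
    simpa [X.cii0, X.cii1] using h
  dtMorph0 m n := X.cii0 (X.d m) n
  dtMorph1 m n := X.cii1 (X.d m) n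
  cm1_0 := X.cii0
  cm1_1 := X.cii1
  cm2_0 := X.ciii0
  cm2_1 := X.ciii1
  cm3_0 _ _ := rfl
  cm3_1 _ _ := rfl
  cm4_0 m n := (X.civ0 m n).symm
  cm4_1 m n := (X.civ1 m n).symm
  cm5_0 b m n := by
    have h := X.cvi1_0 b (X.d m) n
    simp only [h0, LinearMap.zero_apply, sub_eq_zero] at h
    simpa [X.cii0, X.cii1] using h.symm
  cm5_1 b m n := by
    have h := X.cvi1_1 b (X.d m) n
    simp only [h1, LinearMap.zero_apply, sub_eq_zero] at h
    simpa [X.cii0, X.cii1] using h.symm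
  cm5_2 b m n := by
    have h := X.cvi1_2 b (X.d m) n
    simp only [h2, LinearMap.zero_apply, sub_eq_zero] at h
    simpa [X.cii0, X.cii1] using h.symm
  cm6_0 m n b := by
    have h := X.cvi2_0 (X.d m) n b
    simp only [h0, LinearMap.zero_apply, sub_eq_zero] at h
    simpa [X.cii0, X.cii1] using h
  cm6_1 m n b := by
    have h := X.cvi2_1 (X.d m) n b
    simp only [h1, LinearMap.zero_apply, sub_eq_zero] at h
    simpa [X.cii0, X.cii1] using h
  cm6_2 m n b := by
    have h := X.cvi2_2 (X.d m) n b
    simp only [h2, LinearMap.zero_apply, sub_eq_zero] at h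
    simpa [X.cii0, X.cii1] using h

/-- The strict 2-term `Dend_∞`-algebra of a crossed module: `μ₂` consists of the product of `A0`
and its actions on `A1`. -/
def DendCrossedModule.toTwoTermDendInfty (C : DendCrossedModule K A0 A1) :
    TwoTermDendInfty K A0 A1 where
  d := C.dt
  x0 := C.pb0
  x1 := C.pb1
  l0 := C.t10
  l1 := C.t11
  r0 := C.t20
  r1 := C.t21
  s0 := 0
  s1 := 0
  s2 := 0
  cii0 := C.cm1_0
  cii1 := C.cm1_1
  ciii0 := C.cm2_0
  ciii1 := C.cm2_1
  civ0 m n := (C.cm3_0 m n).trans (C.cm4_0 m n).symm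
  civ1 m n := (C.cm3_1 m n).trans (C.cm4_1 m n).symm
  cv0 a b c := by
    simpa only [LinearMap.zero_apply, map_zero] using sub_eq_zero.mpr (C.hb1 a b c)
  cv1 a b c := by
    simpa only [LinearMap.zero_apply, map_zero] using sub_eq_zero.mpr (C.hb2 a b c)
  cv2 a b c := by
    simpa only [LinearMap.zero_apply, map_zero] using sub_eq_zero.mpr (C.hb3 a b c)
  cvi1_0 a b m := sub_eq_zero.mpr (C.rep1 a b m)
  cvi1_1 a b m := sub_eq_zero.mpr (C.rep2 a b m)
  cvi1_2 a b m := sub_eq_zero.mpr (C.rep3 a b m)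
  cvi2_0 a m c := sub_eq_zero.mpr (C.rep4 a m c)
  cvi2_1 a m c := sub_eq_zero.mpr (C.rep5 a m c)
  cvi2_2 a m c := sub_eq_zero.mpr (C.rep6 a m c)
  cvi3_0 m b c := sub_eq_zero.mpr (C.rep7 m b c)
  cvi3_1 m b c := sub_eq_zero.mpr (C.rep8 m b c)
  cvi3_2 m b c := sub_eq_zero.mpr (C.rep9 m b c)
  cvii0 := by simp
  cvii1 := by simp
  cvii2 := by simp
  cvii3 := by simp

end

/-- strict 2-term `Dend_∞`-algebras (`μ₃ = 0`) are in
one-to-one correspondence with crossed modules of dendriform algebras;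
under the correspondence `A0` is a dendriform algebra under `μ₂`, `A1` is a
dendriform algebra under `π_A(m, n) = μ₂(dm, n)`, `d` is a dendriform
morphism, and the actions of `A0` on `A1` satisfy the crossed-module
identities. -/
theorem strict_classification
    {K : Type u} [Field K] {A0 A1 : Type u}
    [AddCommGroup A0] [Module K A0] [AddCommGroup A1] [Module K A1] :
    Nonempty
      ({X : TwoTermDendInfty K A0 A1 // X.s0 = 0 ∧ X.s1 = 0 ∧ X.s2 = 0} ≃
        DendCrossedModule K A0 A1) := by
  refine ⟨⟨fun X => X.1.toCrossedModule X.2.1 X.2.2.1 X.2.2.2,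
    fun C => ⟨C.toTwoTermDendInfty, rfl, rfl, rfl⟩, ?_, ?_⟩⟩
  · rintro ⟨X, h0, h1, h2⟩
    apply Subtype.ext
    cases X
    simp only at h0 h1 h2
    simp [TwoTermDendInfty.toCrossedModule, DendCrossedModule.toTwoTermDendInfty, h0, h1, h2]
  · intro C
    have hp0 : C.t10 ∘ₗ C.dt = C.pa0 := LinearMap.ext₂ C.cm3_0
    have hp1 : C.t11 ∘ₗ C.dt = C.pa1 := LinearMap.ext₂ C.cm3_1
    cases C
    simp only at hp0 hp1
    simp [TwoTermDendInfty.toCrossedModule, DendCrossedModule.toTwoTermDendInfty, hp0, hp1]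
end
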